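/- There exists an absolute constant C > 0 such that for every θ ∈ (0,1) and every positive integer n, ∫_{A} G(s,t,u,v) ds dt du dv ≤ C · n^{2-θ} θ^{-1} (1-θ)^{-3}, and there exists an absolute constant c > 0 such that this integral is ≥ c · n^{2-θ} θ^{-1} (1-θ)^{-3} whenever additionally n^{1-θ} ≥ 8; here A = { (s,t,u,v) ∈ (0,∞)⁴ : 0 < u < 1, 1 ≤ v < n^{1/2}, s < n^{1/4} u^{1/2}, t ≥ u^{-1/2} v^{-1/2} s }. -/

import Mathlib

open MeasureTheory Set Real

/-- The integrand `G(s,t,u,v)` from the paper's computation of the completely 1-summing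
norm of the identity `OH_n → ℓ^n_p`, with `θ = 2/p'`. Here `p = (s, t, u, v)`. -/
noncomputable def G (θ : ℝ) (n : ℕ) (p : ℝ × ℝ × ℝ × ℝ) : ℝ :=
  (n : ℝ) ^ (2 : ℕ) * p.1 ^ (-1 - 2 * θ) * p.2.1 ^ (-1 - 2 * θ) *
    min (min (min ((n : ℝ)⁻¹ * p.1 ^ (4 : ℝ) * p.2.2.1 ^ (-2 : ℝ) * p.2.2.2 ^ (-2 : ℝ))
                  ((n : ℝ)⁻¹ * p.2.1 ^ (4 : ℝ)))
             (min (p.1 ^ (4 : ℝ) * p.2.2.1 ^ (-2 : ℝ)) (p.2.1 ^ (4 : ℝ) * p.2.2.2 ^ (-2 : ℝ))))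
        (min (min (p.2.2.1 ^ (-2 : ℝ) * p.2.2.2 ^ (-2 : ℝ)) (p.2.2.1 ^ (-2 : ℝ)))
             (min 1 (p.2.2.2 ^ (-2 : ℝ))))

/-- The region of integration. -/
def A (n : ℕ) : Set (ℝ × ℝ × ℝ × ℝ) :=
  {p | 0 < p.1 ∧ 0 < p.2.1 ∧ 0 < p.2.2.1 ∧ 0 < p.2.2.2 ∧ p.2.2.1 < 1 ∧ 1 ≤ p.2.2.2 ∧ p.2.2.2 < (n : ℝ) ^ ((1:ℝ)/2) ∧ p.1 < (n : ℝ) ^ ((1:ℝ)/4) * p.2.2.1 ^ ((1:ℝ)/2) ∧ p.2.2.1 ^ (-(1/2) : ℝ) * p.2.2.2 ^ (-(1/2) : ℝ) * p.1 ≤ p.2.1}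

/-!
On `A` the minimum in `G` equals `n⁻¹ s⁴ u⁻² v⁻²`, so the integrand is a monomial, and the region is
fibred over the rectangle `0 < u < 1`, `1 ≤ v < √n` with `s` and `t` ranging over intervals with
monomial endpoints. By Tonelli, integrating out `t`, then `s`, keeps the integrand a monomial, and
the remaining integral over the rectangle factors. The result is the closed form
`n^(2-θ) (1 - n^(-(1-θ)/2)) / (8 θ (1-θ)³)`; the factor `1 - n^(-(1-θ)/2)` lies in `[0, 1]`, and in
`[1/2, 1]` once `n^(1-θ) ≥ 4`.
-/

section Tonelli

variable {α β γ : Type*} [MeasurableSpace α] [MeasurableSpace β] [MeasurableSpace γ]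
  {μ : Measure α} {ν : Measure β} {ρ : Measure γ} [SFinite μ] [SFinite ν] [SFinite ρ]

lemma lintegral_prod_prod_rotate {f : α × β × γ → ENNReal} (hf : Measurable f) :
    ∫⁻ p, f p ∂μ.prod (ν.prod ρ) = ∫⁻ z, ∫⁻ x, ∫⁻ y, f (x, y, z) ∂ν ∂μ ∂ρ := by
  calc ∫⁻ p, f p ∂μ.prod (ν.prod ρ)
      = ∫⁻ x, ∫⁻ q, f (x, q) ∂ν.prod ρ ∂μ := lintegral_prod f hf.aemeasurable
    _ = ∫⁻ x, ∫⁻ z, ∫⁻ y, f (x, y, z) ∂ν ∂ρ ∂μ :=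
        lintegral_congr fun x => lintegral_prod_symm' _ (hf.comp measurable_prodMk_left)
    _ = ∫⁻ z, ∫⁻ x, ∫⁻ y, f (x, y, z) ∂ν ∂μ ∂ρ := by
        refine lintegral_lintegral_swap (Measurable.aemeasurable ?_)
        exact Measurable.lintegral_prod_right' (f := fun q : (α × γ) × β => f (q.1.1, q.2, q.1.2))
          (hf.comp (by fun_prop))

lemma setLIntegral_prod_prod_rotate {f : α × β × γ → ENNReal} (hf : Measurable f)
    {S : Set (α × β × γ)} {R : Set γ} {P : γ → Set α} {Q : γ → α → Set β}
    (hS : MeasurableSet S) (hR : MeasurableSet R) (hP : ∀ z, MeasurableSet (P z))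
    (hQ : ∀ z x, MeasurableSet (Q z x))
    (mem_iff : ∀ x y z, (x, y, z) ∈ S ↔ z ∈ R ∧ x ∈ P z ∧ y ∈ Q z x) :
    ∫⁻ p in S, f p ∂μ.prod (ν.prod ρ) =
      ∫⁻ z in R, ∫⁻ x in P z, ∫⁻ y in Q z x, f (x, y, z) ∂ν ∂μ ∂ρ := by
  rw [← lintegral_indicator hS, lintegral_prod_prod_rotate (hf.indicator hS),
    ← lintegral_indicator hR]
  refine lintegral_congr fun z => ?_
  by_cases hz : z ∈ R
  · rw [indicator_of_mem hz, ← lintegral_indicator (hP z)]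
    refine lintegral_congr fun x => ?_
    by_cases hx : x ∈ P z
    · rw [indicator_of_mem hx, ← lintegral_indicator (hQ z x)]
      refine lintegral_congr fun y => ?_
      by_cases hy : y ∈ Q z x <;> simp [mem_iff, hz, hx, hy]
    · simp [mem_iff, hx]
  · simp [mem_iff, hz]

end Tonelli

lemma setLIntegral_ofReal_const_mul {α : Type*} [MeasurableSpace α] {μ : Measure α}
    {s : Set α} (hs : MeasurableSet s) {g : α → ℝ}
    (hg : IntegrableOn g s μ) (hg_nonneg : ∀ x ∈ s, 0 ≤ g x) {c : ℝ} (hc : 0 ≤ c) :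
    ∫⁻ x in s, ENNReal.ofReal (c * g x) ∂μ = ENNReal.ofReal (c * ∫ x in s, g x ∂μ) := by
  rw [← integral_const_mul, ofReal_integral_eq_lintegral_ofReal (hg.const_mul c)]
  filter_upwards [ae_restrict_mem hs] with x hx using mul_nonneg hc (hg_nonneg x hx)

lemma setLIntegral_Ici_ofReal_const_mul_rpow {a c r : ℝ} (ha : 0 < a) (hc : 0 ≤ c) (hr : r < -1) :
    ∫⁻ x in Ici a, ENNReal.ofReal (c * x ^ r) = ENNReal.ofReal (c * (a ^ (r + 1) / -(r + 1))) := by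
  rw [setLIntegral_ofReal_const_mul measurableSet_Ici
    ((integrableOn_Ici_iff_integrableOn_Ioi (by simp)).mpr (integrableOn_Ioi_rpow_of_lt hr ha))
    (fun x hx => rpow_nonneg (ha.le.trans hx) r) hc,
    integral_Ici_eq_integral_Ioi, integral_Ioi_rpow_of_lt hr ha, neg_div, div_neg]

lemma integrableOn_Ioo_zero_rpow {b r : ℝ} (hr : -1 < r) :
    IntegrableOn (fun x : ℝ => x ^ r) (Ioo 0 b) := by
  rcases le_total 0 b with hb | hb
  · exact (intervalIntegrable_iff_integrableOn_Ioo_of_le hb).mp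
      (intervalIntegral.intervalIntegrable_rpow' hr)
  · simp [Ioo_eq_empty_of_le hb]

lemma integral_Ioo_zero_rpow {b r : ℝ} (hb : 0 ≤ b) (hr : -1 < r) :
    ∫ x in Ioo 0 b, x ^ r = b ^ (r + 1) / (r + 1) := by
  rw [← integral_Ioc_eq_integral_Ioo, ← intervalIntegral.integral_of_le hb,
    integral_rpow (.inl hr), zero_rpow (by linarith), sub_zero]

lemma setLIntegral_Ioo_zero_ofReal_const_mul_rpow {b c r : ℝ} (hb : 0 ≤ b) (hc : 0 ≤ c)
    (hr : -1 < r) :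
    ∫⁻ x in Ioo 0 b, ENNReal.ofReal (c * x ^ r) = ENNReal.ofReal (c * (b ^ (r + 1) / (r + 1))) := by
  rw [setLIntegral_ofReal_const_mul measurableSet_Ioo (integrableOn_Ioo_zero_rpow hr)
    (fun x hx => rpow_nonneg hx.1.le r) hc, integral_Ioo_zero_rpow hb hr]

lemma integrableOn_Ico_rpow {a b : ℝ} (ha : 0 < a) (r : ℝ) :
    IntegrableOn (fun x : ℝ => x ^ r) (Ico a b) :=
  (ContinuousOn.integrableOn_Icc fun x hx =>
    (continuousAt_rpow_const x r (.inl (ha.trans_le hx.1).ne')).continuousWithinAt).mono_set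
    Ico_subset_Icc_self

lemma integral_Ico_rpow {a b r : ℝ} (ha : 0 < a) (hab : a ≤ b) (hr : r ≠ -1) :
    ∫ x in Ico a b, x ^ r = (b ^ (r + 1) - a ^ (r + 1)) / (r + 1) := by
  rw [integral_Ico_eq_integral_Ioc, ← intervalIntegral.integral_of_le hab,
    integral_rpow (.inr ⟨hr, notMem_uIcc_of_lt ha (ha.trans_le hab)⟩)]

lemma integrableOn_Ioo_prod_Ico_rpow_mul_rpow {a b c q : ℝ} (ha : 0 < a) (hq : -1 < q) (r : ℝ) :
    IntegrableOn (fun z : ℝ × ℝ => z.1 ^ q * z.2 ^ r) (Ioo 0 b ×ˢ Ico a c) := by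
  rw [IntegrableOn, Measure.volume_eq_prod, ← Measure.prod_restrict]
  exact (integrableOn_Ioo_zero_rpow hq).mul_prod (integrableOn_Ico_rpow ha r)

lemma integral_Ioo_prod_Ico_rpow_mul_rpow {a b c q r : ℝ} (ha : 0 < a) (hb : 0 ≤ b) (hac : a ≤ c)
    (hq : -1 < q) (hr : r ≠ -1) :
    ∫ z in Ioo 0 b ×ˢ Ico a c, z.1 ^ q * z.2 ^ r =
      b ^ (q + 1) / (q + 1) * ((c ^ (r + 1) - a ^ (r + 1)) / (r + 1)) := by
  rw [Measure.volume_eq_prod, setIntegral_prod_mul (fun u => u ^ q) (fun v => v ^ r),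
    integral_Ioo_zero_rpow hb hq, integral_Ico_rpow ha hac hr]

-- `N`, `S`, `T`, `U`, `V` stand for `n⁻¹`, `s⁴`, `t⁴`, `u⁻²`, `v⁻²`.
lemma min_eq_mul_of_bounds {N S T U V : ℝ} (hN : 0 < N) (hS : 0 < S) (hNV : N ≤ V) (hV : V ≤ 1)
    (hU : 1 ≤ U) (hT : S * U * V ≤ T) (hNSU : N * S * U ≤ 1) :
    min (min (min (N * S * U * V) (N * T)) (min (S * U) (T * V)))
        (min (min (U * V) U) (min 1 V)) = N * S * U * V := by
  have hV0 : 0 < V := hN.trans_le hNV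
  have hSU : 0 < S * U := by positivity
  have hN1 : N ≤ 1 := hNV.trans hV
  have le_NT : N * S * U * V ≤ N * T := by
    simpa only [mul_assoc] using mul_le_mul_of_nonneg_left hT hN.le
  have le_SU : N * S * U * V ≤ S * U := by
    calc N * S * U * V = N * V * (S * U) := by ring
      _ ≤ S * U := mul_le_of_le_one_left hSU.le (mul_le_one₀ hN1 hV0.le hV)
  have le_TV : N * S * U * V ≤ T * V := by
    calc N * S * U * V ≤ V * S * U * V := by gcongr
      _ = S * U * V * V := by ring
      _ ≤ T * V := by gcongr
  have le_V : N * S * U * V ≤ V := mul_le_of_le_one_left hV0.le hNSU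
  have le_UV : V ≤ U * V := le_mul_of_one_le_left hV0.le hU
  rw [min_eq_left le_NT, min_eq_left (le_min le_SU le_TV), min_eq_left]
  exact le_min (le_min (le_V.trans le_UV) (le_V.trans (hV.trans hU)))
    (le_min (le_V.trans hV) le_V)

lemma measurable_G (θ : ℝ) (n : ℕ) : Measurable (G θ n) := by
  unfold G
  fun_prop

lemma G_nonneg {θ : ℝ} {n : ℕ} {p : ℝ × ℝ × ℝ × ℝ} (hp : p ∈ A n) : 0 ≤ G θ n p := by
  obtain ⟨hs, ht, hu, hv, -⟩ := hp
  unfold G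
  positivity

lemma measurableSet_A (n : ℕ) : MeasurableSet (A n) := by
  unfold A
  measurability

lemma mk_mem_A_iff {n : ℕ} {s t u v : ℝ} :
    (s, t, u, v) ∈ A n ↔ (u, v) ∈ Ioo (0 : ℝ) 1 ×ˢ Ico (1 : ℝ) ((n : ℝ) ^ (1 / 2 : ℝ)) ∧
      s ∈ Ioo 0 ((n : ℝ) ^ (1 / 4 : ℝ) * u ^ (1 / 2 : ℝ)) ∧
      t ∈ Ici (u ^ (-(1 / 2) : ℝ) * v ^ (-(1 / 2) : ℝ) * s) := by
  constructor
  · rintro ⟨hs, -, hu, -, hu1, hv1, hvn, hsn, hst⟩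
    exact ⟨⟨⟨hu, hu1⟩, hv1, hvn⟩, ⟨hs, hsn⟩, hst⟩
  · rintro ⟨⟨⟨hu, hu1⟩, hv1, hvn⟩, ⟨hs, hsn⟩, hst⟩
    have hv : 0 < v := one_pos.trans_le hv1
    exact ⟨hs, lt_of_lt_of_le (by positivity) hst, hu, hv, hu1, hv1, hvn, hsn, hst⟩

section Region

variable {s t u v x : ℝ}

lemma inv_le_rpow_neg_two (hv : 0 < v) (hx : 0 ≤ x) (hvx : v < x ^ (1 / 2 : ℝ)) :
    x⁻¹ ≤ v ^ (-2 : ℝ) :=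
  calc x⁻¹ = (x ^ (1 / 2 : ℝ)) ^ (-2 : ℝ) := by rw [← rpow_mul hx, ← rpow_neg_one]; norm_num
    _ ≤ v ^ (-2 : ℝ) := rpow_le_rpow_of_nonpos hv hvx.le (by norm_num)

lemma rpow_four_mul_le (hs : 0 ≤ s) (hu : 0 ≤ u) (hv : 0 ≤ v)
    (hst : u ^ (-(1 / 2) : ℝ) * v ^ (-(1 / 2) : ℝ) * s ≤ t) :
    s ^ (4 : ℝ) * u ^ (-2 : ℝ) * v ^ (-2 : ℝ) ≤ t ^ (4 : ℝ) :=
  calc s ^ (4 : ℝ) * u ^ (-2 : ℝ) * v ^ (-2 : ℝ)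
      = (u ^ (-(1 / 2) : ℝ) * v ^ (-(1 / 2) : ℝ) * s) ^ (4 : ℝ) := by
        rw [mul_rpow (by positivity) hs, mul_rpow (by positivity) (by positivity),
          ← rpow_mul hu, ← rpow_mul hv]
        norm_num
        ring
    _ ≤ t ^ (4 : ℝ) := rpow_le_rpow (by positivity) hst (by norm_num)

lemma inv_mul_rpow_four_mul_le_one (hs : 0 ≤ s) (hu : 0 < u) (hx : 0 < x)
    (hsx : s < x ^ (1 / 4 : ℝ) * u ^ (1 / 2 : ℝ)) :
    x⁻¹ * s ^ (4 : ℝ) * u ^ (-2 : ℝ) ≤ 1 :=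
  calc x⁻¹ * s ^ (4 : ℝ) * u ^ (-2 : ℝ)
      ≤ x⁻¹ * (x ^ (1 / 4 : ℝ) * u ^ (1 / 2 : ℝ)) ^ (4 : ℝ) * u ^ (-2 : ℝ) := by gcongr
    _ = (x⁻¹ * x) * (u ^ (2 : ℝ) * u ^ (-2 : ℝ)) := by
        rw [mul_rpow (by positivity) (by positivity), ← rpow_mul hu.le, ← rpow_mul hx.le]
        norm_num
        ring
    _ = 1 := by rw [inv_mul_cancel₀ hx.ne', ← rpow_add hu]; norm_num

end Region

lemma G_eq_of_mem_A {θ : ℝ} {n : ℕ} {s t u v : ℝ} (h : (s, t, u, v) ∈ A n) :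
    G θ n (s, t, u, v) =
      n * s ^ (3 - 2 * θ) * u ^ (-2 : ℝ) * v ^ (-2 : ℝ) * t ^ (-1 - 2 * θ) := by
  obtain ⟨hs, ht, hu, hv, hu1, hv1, hvn, hsn, hst⟩ := h
  dsimp only at hs ht hu hv hu1 hv1 hvn hsn hst
  have hn : (0 : ℝ) < n := by
    refine (Nat.cast_nonneg n).lt_of_ne' fun hn => ?_
    rw [hn, zero_rpow (by norm_num)] at hvn
    linarith
  have min_eq := min_eq_mul_of_bounds (inv_pos.mpr hn) (rpow_pos_of_pos hs 4)
    (inv_le_rpow_neg_two hv hn.le hvn) (rpow_le_one_of_one_le_of_nonpos hv1 (by norm_num))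
    (one_le_rpow_of_pos_of_le_one_of_nonpos hu hu1.le (by norm_num))
    (rpow_four_mul_le hs.le hu.le hv.le hst) (inv_mul_rpow_four_mul_le_one hs.le hu hn hsn)
  have s_pow : s ^ (3 - 2 * θ) = s ^ (-1 - 2 * θ) * s ^ (4 : ℝ) := by
    rw [← rpow_add hs]
    ring_nf
  simp only [G, min_eq, s_pow]
  field_simp

section IteratedIntegrals

variable {θ s u v x : ℝ}

lemma setLIntegral_fiber_t (hθ : 0 < θ) (hs : 0 < s) (hu : 0 < u) (hv : 0 < v) (hx : 0 ≤ x) :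
    ∫⁻ t in Ici (u ^ (-(1 / 2) : ℝ) * v ^ (-(1 / 2) : ℝ) * s), ENNReal.ofReal
        (x * s ^ (3 - 2 * θ) * u ^ (-2 : ℝ) * v ^ (-2 : ℝ) * t ^ (-1 - 2 * θ)) =
      ENNReal.ofReal (x / (2 * θ) * (u * v) ^ (θ - 2) * s ^ (3 - 4 * θ)) := by
  have endpoint_rpow : (u ^ (-(1 / 2) : ℝ) * v ^ (-(1 / 2) : ℝ) * s) ^ (-1 - 2 * θ + 1) =
      u ^ θ * v ^ θ * s ^ (-(2 * θ)) := by
    rw [mul_rpow (by positivity) hs.le, mul_rpow (by positivity) (by positivity),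
      ← rpow_mul hu.le, ← rpow_mul hv.le]
    ring_nf
  have s_rpow : s ^ (3 - 4 * θ) = s ^ (3 - 2 * θ) * s ^ (-(2 * θ)) := by
    rw [← rpow_add hs]
    ring_nf
  rw [setLIntegral_Ici_ofReal_const_mul_rpow (by positivity) (by positivity) (by linarith),
    endpoint_rpow, s_rpow, mul_rpow hu.le hv.le, sub_eq_add_neg θ, rpow_add hu, rpow_add hv,
    show -(-1 - 2 * θ + 1) = 2 * θ by ring]
  congr 1
  field_simp

lemma setLIntegral_fiber_s (hθ : 0 < θ) (hθ1 : θ < 1) (hu : 0 < u) (hv : 0 < v) (hx : 0 < x) :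
    ∫⁻ s in Ioo 0 (x ^ (1 / 4 : ℝ) * u ^ (1 / 2 : ℝ)), ENNReal.ofReal
        (x / (2 * θ) * (u * v) ^ (θ - 2) * s ^ (3 - 4 * θ)) =
      ENNReal.ofReal (x ^ (2 - θ) / (8 * θ * (1 - θ)) * (u ^ (-θ) * v ^ (θ - 2))) := by
  have hθ' : 0 < 1 - θ := sub_pos.mpr hθ1
  have endpoint_rpow : (x ^ (1 / 4 : ℝ) * u ^ (1 / 2 : ℝ)) ^ (3 - 4 * θ + 1) =
      x ^ (1 - θ) * u ^ (2 - 2 * θ) := by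
    rw [mul_rpow (by positivity) (by positivity), ← rpow_mul hu.le, ← rpow_mul hx.le]
    ring_nf
  have x_rpow : x ^ (2 - θ) = x * x ^ (1 - θ) := by
    rw [← rpow_one_add' hx.le (by linarith)]
    ring_nf
  have u_rpow : u ^ (-θ) = u ^ (θ - 2) * u ^ (2 - 2 * θ) := by
    rw [← rpow_add hu]
    ring_nf
  rw [setLIntegral_Ioo_zero_ofReal_const_mul_rpow (by positivity) (by positivity) (by linarith),
    endpoint_rpow, x_rpow, u_rpow, mul_rpow hu.le hv.le,
    show 3 - 4 * θ + 1 = 4 * (1 - θ) by ring]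
  congr 1
  field_simp
  ring

lemma setLIntegral_base {c : ℝ} (hc : 0 ≤ c) (hθ1 : θ < 1) (hx : 1 ≤ x) :
    ∫⁻ z in Ioo (0 : ℝ) 1 ×ˢ Ico (1 : ℝ) x, ENNReal.ofReal (c * (z.1 ^ (-θ) * z.2 ^ (θ - 2))) =
      ENNReal.ofReal (c * ((1 - x ^ (θ - 1)) / (1 - θ) ^ 2)) := by
  have hθ' : 1 - θ ≠ 0 := by linarith
  rw [setLIntegral_ofReal_const_mul (measurableSet_Ioo.prod measurableSet_Ico)
      (integrableOn_Ioo_prod_Ico_rpow_mul_rpow one_pos (by linarith) _)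
      (fun z hz => mul_nonneg (rpow_nonneg hz.1.1.le _)
        (rpow_nonneg (zero_le_one.trans hz.2.1) _)) hc,
    integral_Ioo_prod_Ico_rpow_mul_rpow one_pos zero_le_one hx (by linarith) (by linarith),
    one_rpow, one_rpow, show θ - 2 + 1 = θ - 1 by ring, show -θ + 1 = 1 - θ by ring, ← neg_sub 1 θ]
  congr 1
  field_simp
  ring

end IteratedIntegrals

lemma lintegral_G_eq {θ : ℝ} (hθ : 0 < θ) (hθ1 : θ < 1) {n : ℕ} (hn : 0 < n) :
    ∫⁻ p in A n, ENNReal.ofReal (G θ n p) = ENNReal.ofReal ((n : ℝ) ^ (2 - θ) / (8 * θ * (1 - θ)) *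
      ((1 - ((n : ℝ) ^ (1 / 2 : ℝ)) ^ (θ - 1)) / (1 - θ) ^ 2)) := by
  have hn1 : (1 : ℝ) ≤ n := by exact_mod_cast hn
  have hn0 : (0 : ℝ) < n := one_pos.trans_le hn1
  have : 0 < 1 - θ := sub_pos.mpr hθ1
  set base := Ioo (0 : ℝ) 1 ×ˢ Ico (1 : ℝ) ((n : ℝ) ^ (1 / 2 : ℝ))
  have measurableSet_base : MeasurableSet base := measurableSet_Ioo.prod measurableSet_Ico
  have base_pos : ∀ z ∈ base, 0 < z.1 ∧ 0 < z.2 := fun z hz => ⟨hz.1.1, one_pos.trans_le hz.2.1⟩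
  calc ∫⁻ p in A n, ENNReal.ofReal (G θ n p)
      = ∫⁻ z in base, ∫⁻ s in Ioo 0 ((n : ℝ) ^ (1 / 4 : ℝ) * z.1 ^ (1 / 2 : ℝ)),
          ∫⁻ t in Ici (z.1 ^ (-(1 / 2) : ℝ) * z.2 ^ (-(1 / 2) : ℝ) * s),
            ENNReal.ofReal (G θ n (s, t, z)) :=
        setLIntegral_prod_prod_rotate (measurable_G θ n).ennreal_ofReal (measurableSet_A n)
          measurableSet_base (fun _ => measurableSet_Ioo) (fun _ _ => measurableSet_Ici)
          fun _ _ _ => mk_mem_A_iff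
    _ = ∫⁻ z in base, ∫⁻ s in Ioo 0 ((n : ℝ) ^ (1 / 4 : ℝ) * z.1 ^ (1 / 2 : ℝ)),
          ENNReal.ofReal (n / (2 * θ) * (z.1 * z.2) ^ (θ - 2) * s ^ (3 - 4 * θ)) := by
        refine setLIntegral_congr_fun measurableSet_base fun z hz => ?_
        refine setLIntegral_congr_fun measurableSet_Ioo fun s hs => ?_
        rw [← setLIntegral_fiber_t hθ hs.1 (base_pos z hz).1 (base_pos z hz).2 hn0.le]
        refine setLIntegral_congr_fun measurableSet_Ici fun t ht => ?_
        rw [G_eq_of_mem_A (mk_mem_A_iff.mpr ⟨hz, hs, ht⟩)]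
    _ = ∫⁻ z in base, ENNReal.ofReal
          ((n : ℝ) ^ (2 - θ) / (8 * θ * (1 - θ)) * (z.1 ^ (-θ) * z.2 ^ (θ - 2))) :=
        setLIntegral_congr_fun measurableSet_base fun z hz =>
          setLIntegral_fiber_s hθ hθ1 (base_pos z hz).1 (base_pos z hz).2 hn0
    _ = _ := setLIntegral_base (by positivity) hθ1 (one_le_rpow hn1 (by norm_num))

lemma integral_G_eq {θ : ℝ} (hθ : 0 < θ) (hθ1 : θ < 1) {n : ℕ} (hn : 0 < n) :
    ∫ p in A n, G θ n p = (1 - (n : ℝ) ^ ((θ - 1) / 2)) / 8 *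
      ((n : ℝ) ^ (2 - θ) * θ ^ (-1 : ℝ) * (1 - θ) ^ (-3 : ℝ)) := by
  have hθ' : 0 < 1 - θ := sub_pos.mpr hθ1
  have n_rpow : ((n : ℝ) ^ (1 / 2 : ℝ)) ^ (θ - 1) = (n : ℝ) ^ ((θ - 1) / 2) := by
    rw [← rpow_mul n.cast_nonneg]
    ring_nf
  have rpow_le_one : (n : ℝ) ^ ((θ - 1) / 2) ≤ 1 :=
    rpow_le_one_of_one_le_of_nonpos (by exact_mod_cast hn) (by linarith)
  have : 0 ≤ 1 - (n : ℝ) ^ ((θ - 1) / 2) := sub_nonneg.mpr rpow_le_one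
  rw [integral_eq_lintegral_of_nonneg_ae
      ((ae_restrict_mem (measurableSet_A n)).mono fun _ hp => G_nonneg hp)
      (measurable_G θ n).aestronglyMeasurable,
    lintegral_G_eq hθ hθ1 hn, n_rpow, ENNReal.toReal_ofReal (by positivity), rpow_neg_one,
    rpow_neg hθ'.le, show (3 : ℝ) = (3 : ℕ) by norm_num, rpow_natCast]
  field_simp

lemma rpow_sub_one_div_two_le_half {θ x : ℝ} (hx : 0 ≤ x) (h : 4 ≤ x ^ (1 - θ)) :
    x ^ ((θ - 1) / 2) ≤ 1 / 2 :=
  calc x ^ ((θ - 1) / 2) = (x ^ (1 - θ)) ^ (-(1 / 2) : ℝ) := by rw [← rpow_mul hx]; ring_nf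
    _ ≤ (2 ^ (2 : ℝ)) ^ (-(1 / 2) : ℝ) :=
        rpow_le_rpow_of_nonpos (by positivity) (by norm_num [h]) (by norm_num)
    _ = 1 / 2 := by rw [← rpow_mul zero_le_two]; norm_num [rpow_neg_one]

theorem stmt_14 :
    (∃ C : ℝ, 0 < C ∧ ∀ θ : ℝ, 0 < θ → θ < 1 → ∀ n : ℕ, 0 < n →
      (∫ p in A n, G θ n p) ≤ C * ((n : ℝ) ^ (2 - θ) * θ ^ (-1 : ℝ) * (1 - θ) ^ (-3 : ℝ))) ∧
    (∃ c : ℝ, 0 < c ∧ ∀ θ : ℝ, 0 < θ → θ < 1 → ∀ n : ℕ, 0 < n →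
      (8 : ℝ) ≤ (n : ℝ) ^ (1 - θ) →
      c * ((n : ℝ) ^ (2 - θ) * θ ^ (-1 : ℝ) * (1 - θ) ^ (-3 : ℝ)) ≤ ∫ p in A n, G θ n p) := by
  refine ⟨⟨1 / 8, by norm_num, fun θ hθ hθ1 n hn => ?_⟩,
    ⟨1 / 16, by norm_num, fun θ hθ hθ1 n hn h8 => ?_⟩⟩
  · have : 0 ≤ 1 - θ := sub_nonneg.mpr hθ1.le
    rw [integral_G_eq hθ hθ1 hn]
    refine mul_le_mul_of_nonneg_right ?_ (by positivity)
    linarith [rpow_nonneg n.cast_nonneg ((θ - 1) / 2)]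
  · have : 0 ≤ 1 - θ := sub_nonneg.mpr hθ1.le
    rw [integral_G_eq hθ hθ1 hn]
    refine mul_le_mul_of_nonneg_right ?_ (by positivity)
    linarith [rpow_sub_one_div_two_le_half n.cast_nonneg (by linarith : 4 ≤ (n : ℝ) ^ (1 - θ))]
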